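/- arXiv:math/0202204 — 3 statements merged into one kernel-verified Lean document; each statement's English description precedes it below -/
import Mathlib

section
/- For every truth assignment a : {1,…,n} → {true,false}, the set S_a = {(i, a(i)) : i = 1,…,n} is a face of the complex Δ if and only if a satisfies every clause of the CNF formula φ. -/
/-- For a clause `C` (a finite set of literals `(j,b)`), the circuit
`C' = {(j, ¬b) : (j,b) ∈ C}`. -/
def clauseDual {n : ℕ} (C : Finset (Fin n × Bool)) : Finset (Fin n × Bool) :=
  C.image (fun l => (l.1, !l.2))

/-- The circuit `P i = {t_i, f_i}`. -/
def pairCircuit {n : ℕ} (i : Fin n) : Finset (Fin n × Bool) :=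
  {(i, true), (i, false)}

/-- `S` is a face of the complex `Δ` associated with the CNF formula `φ`:
it contains none of the circuits `C₁', …, C_m', P₁, …, P_n`. -/
def IsFace {n m : ℕ} (φ : Fin m → Finset (Fin n × Bool)) (S : Finset (Fin n × Bool)) : Prop :=
  (∀ k, ¬ clauseDual (φ k) ⊆ S) ∧ (∀ i, ¬ pairCircuit i ⊆ S)

/-- The set `S_a = {(i, a i) : i}` associated with a truth assignment `a`. -/
def assignFace {n : ℕ} (a : Fin n → Bool) : Finset (Fin n × Bool) :=
  Finset.univ.image (fun i => (i, a i))

/-- The assignment `a` satisfies the clause `C`. -/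
def SatisfiesClause {n : ℕ} (a : Fin n → Bool) (C : Finset (Fin n × Bool)) : Prop :=
  ∃ l ∈ C, a l.1 = l.2

/-- The assignment `a` satisfies every clause of the CNF formula `φ`. -/
def Satisfies {n m : ℕ} (φ : Fin m → Finset (Fin n × Bool)) (a : Fin n → Bool) : Prop :=
  ∀ k, SatisfiesClause a (φ k)

section Circuits

variable {n : ℕ} {S : Finset (Fin n × Bool)}

theorem clauseDual_subset_iff {C : Finset (Fin n × Bool)} :
    clauseDual C ⊆ S ↔ ∀ l ∈ C, (l.1, !l.2) ∈ S :=
  Finset.image_subset_iff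

theorem pairCircuit_subset_iff {i : Fin n} :
    pairCircuit i ⊆ S ↔ (i, true) ∈ S ∧ (i, false) ∈ S := by
  simp only [pairCircuit, Finset.insert_subset_iff, Finset.singleton_subset_iff]

end Circuits

section Assignment

variable {n : ℕ} {a : Fin n → Bool}

theorem mem_assignFace {l : Fin n × Bool} : l ∈ assignFace a ↔ a l.1 = l.2 := by
  simp [assignFace, Prod.ext_iff]

theorem not_satisfiesClause_iff {C : Finset (Fin n × Bool)} :
    ¬ SatisfiesClause a C ↔ ∀ l ∈ C, a l.1 = !l.2 := by
  simp only [SatisfiesClause, not_exists, not_and, Bool.eq_not]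

theorem clauseDual_subset_assignFace_iff {C : Finset (Fin n × Bool)} :
    clauseDual C ⊆ assignFace a ↔ ¬ SatisfiesClause a C := by
  simp only [clauseDual_subset_iff, mem_assignFace, not_satisfiesClause_iff]

theorem not_pairCircuit_subset_assignFace (a : Fin n → Bool) (i : Fin n) :
    ¬ pairCircuit i ⊆ assignFace a := by
  rw [pairCircuit_subset_iff, mem_assignFace, mem_assignFace]
  rintro ⟨h_true, h_false⟩
  exact Bool.false_ne_true (h_false.symm.trans h_true)

end Assignment

theorem face_iff_satisfies {n m : ℕ} (φ : Fin m → Finset (Fin n × Bool)) (a : Fin n → Bool) :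
    IsFace φ (assignFace a) ↔ Satisfies φ a := by
  calc IsFace φ (assignFace a)
      ↔ ∀ k, ¬ clauseDual (φ k) ⊆ assignFace a :=
        and_iff_left (not_pairCircuit_subset_assignFace a)
    _ ↔ Satisfies φ a :=
        forall_congr' fun _ => clauseDual_subset_assignFace_iff.not_left
end

section
/- The number of n-element faces of Δ plus the number of n-element members of the dual complex Δ̄ equals the binomial coefficient C(2n, n), i.e., f_{n-1}(Δ) + f_{n-1}(Δ̄) = C(2n, n). -/
/-- `S` belongs to the dual complex `Δ̄` associated with `φ`:
`S` is contained in the complement of some circuit. -/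
def InDualCNF {n m : ℕ} (φ : Fin m → Finset (Fin n × Bool))
    (S : Finset (Fin n × Bool)) : Prop :=
  (∃ k, S ⊆ (clauseDual (φ k))ᶜ) ∨ (∃ i, S ⊆ (pairCircuit i)ᶜ)

/-!
A set belongs to `Δ̄` exactly when its complement is not a face of `Δ`. As `|E| = 2n`,
complementation permutes the `n`-element subsets of `E`, so the `n`-element members of `Δ̄` are
as many as the `n`-element non-faces of `Δ`.
-/

open Finset

section Complement

variable {α : Type*} [Fintype α] [DecidableEq α] {k l : ℕ}

theorem card_compl_eq_iff_card_eq (hkl : k + l = Fintype.card α) {S : Finset α} :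
    #Sᶜ = k ↔ #S = l := by
  have := S.card_add_card_compl
  lia

theorem natCard_compl_and_card_eq (hkl : k + l = Fintype.card α) (p : Finset α → Prop) :
    Nat.card {S : Finset α // p Sᶜ ∧ #S = l} = Nat.card {S : Finset α // p S ∧ #S = k} :=
  Nat.card_congr <| compl_involutive.toPerm.subtypeEquiv fun _ =>
    and_congr_right' (card_compl_eq_iff_card_eq hkl).symm

end Complement

theorem natCard_and_card_eq_add_natCard_not_and_card_eq {α : Type*} [Fintype α]
    (p : Finset α → Prop) (k : ℕ) :
    Nat.card {S : Finset α // p S ∧ #S = k} + Nat.card {S : Finset α // ¬ p S ∧ #S = k} =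
      (Fintype.card α).choose k := by
  classical
  simp only [Nat.card_eq_fintype_card, Fintype.card_subtype, and_comm (b := #_ = k),
    ← filter_filter]
  rw [card_filter_add_card_filter_not, univ_filter_card_eq, card_powersetCard, card_univ]

theorem card_faces_add_card_dual_general {α : Type*} [Fintype α] [DecidableEq α] {k l : ℕ}
    (hkl : k + l = Fintype.card α) (p : Finset α → Prop) :
    Nat.card {S : Finset α // p S ∧ #S = k} + Nat.card {S : Finset α // ¬ p Sᶜ ∧ #S = l} =
      (Fintype.card α).choose k := by
  rw [natCard_compl_and_card_eq hkl (¬ p ·), natCard_and_card_eq_add_natCard_not_and_card_eq]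

theorem inDualCNF_iff_not_isFace_compl {n m : ℕ} {φ : Fin m → Finset (Fin n × Bool)}
    {S : Finset (Fin n × Bool)} : InDualCNF φ S ↔ ¬ IsFace φ Sᶜ := by
  simp only [InDualCNF, IsFace, subset_compl_comm (s := S), not_and_or, not_forall, not_not]

theorem card_faces_add_card_dual {n m : ℕ} (φ : Fin m → Finset (Fin n × Bool)) :
    Nat.card {S : Finset (Fin n × Bool) // IsFace φ S ∧ S.card = n} +
      Nat.card {S : Finset (Fin n × Bool) // InDualCNF φ S ∧ S.card = n} =
      (2 * n).choose n := by
  have card_literals : Fintype.card (Fin n × Bool) = 2 * n := by simp [mul_comm]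
  simpa only [inDualCNF_iff_not_isFace_compl, card_literals] using
    card_faces_add_card_dual_general (by rw [card_literals, two_mul]) (IsFace φ)
end

section
/- For a finite graph G with at least one edge and no isolated vertices, the simplicial complex Δ(G) is partitionable if and only if at most one connected component of G is a tree. -/
/-- The faces of the simplicial complex `Δ(G)` associated with a graph `G`:
the empty set, the singletons of vertices, and the edges. -/
def GraphFace {V : Type} [DecidableEq V] (G : SimpleGraph V) (S : Finset V) : Prop :=
  S = ∅ ∨ (∃ v : V, S = {v}) ∨ (∃ u w : V, G.Adj u w ∧ S = {u, w})

/-- `Δ(G)` is partitionable in the sense of Stanley: its set of faces (including the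
empty face) can be partitioned into intervals `[R i, F i]` whose tops `F i` are
facets, i.e. edges of `G`. -/
def GraphPartitionable {V : Type} [DecidableEq V] (G : SimpleGraph V) : Prop :=
  ∃ (N : ℕ) (R F : Fin N → Finset V),
    (∀ i, R i ⊆ F i) ∧
    (∀ i, ∃ u w : V, G.Adj u w ∧ F i = {u, w}) ∧
    (∀ S : Finset V, GraphFace G S → ∃! i, R i ⊆ S ∧ S ⊆ F i)

/-!
In a partition of the faces of `Δ(G)` into intervals whose tops are edges, the interval containing
`{v}` has as its top an edge `s(v, g v)`, so that the partition makes every vertex select one of its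
neighbors. An interval with top `s(v, w)` contains `∅` exactly when it contains both `{v}` and
`{w}`, i.e. when `g` swaps `v` and `w`. Hence partitions correspond to selections `g` which swap
exactly one pair of vertices.

If `g` swaps no pair inside a finite component, then `v ↦ s(v, g v)` injects its vertices into its
edges, which is impossible for a tree: every tree component contains the swapped pair. Conversely,
moving towards a root, and from the root to a neighbor, swaps only the root and that neighbor; in
a component with a cycle, moving towards `x` in the graph without a non-bridge `s(x, y)`, and from
`x` to `y`, swaps nothing.
-/

section NeighborSelection

variable {V : Type*} {G : SimpleGraph V} {g : V → V} {r s : V}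

/-- The map `g` selects a neighbor of every vertex. It encodes a selection of an incident edge at
every vertex, the edge at `v` being `s(v, g v)`. -/
def IsNeighborSelection (G : SimpleGraph V) (g : V → V) : Prop :=
  ∀ v, G.Adj v (g v)

/-- The points `r` and `s` are the only ones fixed by the square of `g`. For a neighbor selection
`g` of a graph this means that `g` swaps `r` and `s` and no other pair, i.e. that `s(r, s)` is the
only edge selected at both of its ends. -/
def HasUniqueSwap (g : V → V) (r s : V) : Prop :=
  ∀ v, g (g v) = v ↔ v = r ∨ v = s

lemma eq_or_apply_eq_of_apply_apply_eq {α : Type*} [Preorder α] (f : V → α)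
    (hf : ∀ v, v ≠ r → f (g v) < f v) {v : V} (hv : g (g v) = v) : v = r ∨ g v = r := by
  by_contra! h
  have hlt := hf (g v) h.2
  rw [hv] at hlt
  exact lt_asymm hlt (hf v h.1)

lemma eq_of_mk_apply_eq_mk_apply (hg : ∀ v, g (g v) ≠ v) {v w : V}
    (h : s(v, g v) = s(w, g w)) : v = w := by
  rcases Sym2.eq_iff.mp h with ⟨hvw, -⟩ | ⟨hv, hw⟩
  · exact hvw
  · exact absurd (by rw [hw, hv]) (hg v)

namespace IsNeighborSelection

lemma apply_left (hg : IsNeighborSelection G g) (hswap : HasUniqueSwap g r s) : g r = s := by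
  have hr : g (g r) = r := (hswap r).mpr (.inl rfl)
  exact ((hswap (g r)).mp (by rw [hr])).resolve_left (hg r).ne'

lemma mk_apply_eq (hg : IsNeighborSelection G g) (hswap : HasUniqueSwap g r s) {v : V}
    (hv : g (g v) = v) : s(v, g v) = s(r, s) := by
  have hrs : g r = s := hg.apply_left hswap
  rcases (hswap v).mp hv with rfl | rfl
  · rw [hrs]
  · rw [← hrs, (hswap r).mpr (.inl rfl), Sym2.eq_swap]

lemma not_isTree [Finite V] (hg : IsNeighborSelection G g) (hne : ∀ v, g (g v) ≠ v) :
    ¬ G.IsTree := by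
  intro hT
  let edgeAt : V → G.edgeSet := fun v => ⟨s(v, g v), hg v⟩
  have hinj : edgeAt.Injective := fun v w h =>
    eq_of_mk_apply_eq_mk_apply hne (congrArg Subtype.val h)
  have hle := Nat.card_le_card_of_injective edgeAt hinj
  have hcard := (SimpleGraph.isTree_iff_connected_and_card.mp hT).2
  omega

lemma connectedComponentMk_eq_of_isTree [Finite V] (hg : IsNeighborSelection G g)
    (hswap : HasUniqueSwap g r s) {c : G.ConnectedComponent} (hc : (G.induce c.supp).IsTree) :
    G.connectedComponentMk r = c := by
  by_contra hr
  have hrs : G.Adj r s := hg.apply_left hswap ▸ hg r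
  have hmaps : Set.MapsTo g c.supp c.supp := fun v hv => c.mem_supp_of_adj_mem_supp hv (hg v)
  have hsel : IsNeighborSelection (G.induce c.supp) (hmaps.restrict g) := fun v => hg v
  refine hsel.not_isTree (fun v hv => ?_) hc
  rcases (hswap v).mp (congrArg Subtype.val hv) with h | h
  · exact hr (h ▸ v.2)
  · exact hr (c.mem_supp_of_adj_mem_supp (h ▸ v.2) hrs.symm)

end IsNeighborSelection

lemma exists_adj_dist_lt (hG : G.Connected) {v : V} (hv : v ≠ r) :
    ∃ w, G.Adj v w ∧ G.dist w r < G.dist v r := by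
  obtain ⟨p, hp⟩ := hG.exists_walk_length_eq_dist v r
  cases p with
  | nil => exact absurd rfl hv
  | cons hadj p =>
    refine ⟨_, hadj, ?_⟩
    rw [← hp, SimpleGraph.Walk.length_cons]
    exact Nat.lt_succ_of_le (SimpleGraph.dist_le p)

lemma exists_map_adj_dist_lt (hG : G.Connected) (r s : V) :
    ∃ g : V → V, g r = s ∧ ∀ v, v ≠ r → G.Adj v (g v) ∧ G.dist (g v) r < G.dist v r := by
  classical
  choose! parent hparent using fun v (hv : v ≠ r) => exists_adj_dist_lt hG hv
  exact ⟨Function.update parent r s, by simp, fun v hv => by simpa [hv] using hparent v hv⟩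

theorem exists_isNeighborSelection_hasUniqueSwap (hG : G.Connected) (hrs : G.Adj r s) :
    ∃ g, IsNeighborSelection G g ∧ HasUniqueSwap g r s := by
  obtain ⟨g, hr, hg⟩ := exists_map_adj_dist_lt hG r s
  have hs : g s = r := by
    have hlt := (hg s hrs.ne').2
    rw [SimpleGraph.dist_eq_one_iff_adj.mpr hrs.symm, Nat.lt_one_iff] at hlt
    exact hG.dist_eq_zero_iff.mp hlt
  refine ⟨g, fun v => ?_, fun v => ⟨fun hv => ?_, ?_⟩⟩
  · by_cases hv : v = r
    · rwa [hv, hr]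
    · exact (hg v hv).1
  · refine (eq_or_apply_eq_of_apply_apply_eq (G.dist · r)
      (fun v hv => (hg v hv).2) hv).imp_right fun h => ?_
    rw [← hv, h, hr]
  · rintro (rfl | rfl)
    · rw [hr, hs]
    · rw [hs, hr]

theorem exists_isNeighborSelection_apply_apply_ne (hG : G.Connected) (hT : ¬ G.IsTree) :
    ∃ g, IsNeighborSelection G g ∧ ∀ v, g (g v) ≠ v := by
  obtain ⟨x, y, hxy, hbridge⟩ : ∃ x y, G.Adj x y ∧ ¬ G.IsBridge s(x, y) := by
    by_contra! h
    exact hT ⟨hG, SimpleGraph.isAcyclic_iff_forall_adj_isBridge.mpr h⟩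
  obtain ⟨g, hx, hg⟩ :=
    exists_map_adj_dist_lt (hG.connected_delete_edge_of_not_isBridge hbridge) x y
  have hy : g y ≠ x := fun h => by
    have hadj := (hg y hxy.ne').1
    rw [h] at hadj
    simp [Sym2.eq_swap] at hadj
  refine ⟨g, fun v => ?_, fun v hv => ?_⟩
  · by_cases hv : v = x
    · rwa [hv, hx]
    · exact G.deleteEdges_le _ (hg v hv).1
  · rcases eq_or_apply_eq_of_apply_apply_eq ((G.deleteEdges {s(x, y)}).dist · x)
      (fun v hv => (hg v hv).2) hv with rfl | h
    · exact hy (hx ▸ hv)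
    · rw [h, hx] at hv
      exact hy (hv ▸ h)

/-- The self-map of the vertices of `G` which restricts to `g c` on each component `c`; it assembles
neighbor selections of the components into one of `G`. -/
def componentwise (g : ∀ c : G.ConnectedComponent, c.supp → c.supp) (v : V) : V :=
  g (G.connectedComponentMk v) ⟨v, rfl⟩

lemma componentwise_coe (g : ∀ c : G.ConnectedComponent, c.supp → c.supp)
    (c : G.ConnectedComponent) (v : c.supp) : componentwise g v = g c v := by
  obtain ⟨v, rfl⟩ := v
  rfl

lemma exists_isNeighborSelection_induce_supp (hrs : G.Adj r s) (c : G.ConnectedComponent)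
    (hc : (G.induce c.supp).IsTree → r ∈ c.supp) :
    ∃ g : c.supp → c.supp, IsNeighborSelection (G.induce c.supp) g ∧
      ∀ v, g (g v) = v ↔ (v : V) = r ∨ (v : V) = s := by
  have hconn : (G.induce c.supp).Connected := c.connected_toSimpleGraph
  have hmem : s ∈ c.supp ↔ r ∈ c.supp := (c.mem_supp_congr_adj hrs).symm
  by_cases hr : r ∈ c.supp
  · obtain ⟨g, hg, hswap⟩ := exists_isNeighborSelection_hasUniqueSwap hconn
      (r := ⟨r, hr⟩) (s := ⟨s, hmem.mpr hr⟩) (SimpleGraph.induce_adj.mpr hrs)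
    exact ⟨g, hg, fun v => by simpa [Subtype.ext_iff] using hswap v⟩
  · obtain ⟨g, hg, hne⟩ := exists_isNeighborSelection_apply_apply_ne hconn (mt hc hr)
    refine ⟨g, hg, fun v => iff_of_false (hne v) ?_⟩
    rintro (h | h)
    · exact hr (h ▸ v.2)
    · exact hr (hmem.mp (h ▸ v.2))

theorem exists_isNeighborSelection_hasUniqueSwap_of_forall_isTree_mem_supp (hrs : G.Adj r s)
    (hr : ∀ c : G.ConnectedComponent, (G.induce c.supp).IsTree → r ∈ c.supp) :
    ∃ g, IsNeighborSelection G g ∧ HasUniqueSwap g r s := by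
  choose g hg hswap using fun c => exists_isNeighborSelection_induce_supp hrs c (hr c)
  refine ⟨componentwise g, fun v => hg (G.connectedComponentMk v) ⟨v, rfl⟩, fun v => ?_⟩
  rw [← hswap (G.connectedComponentMk v) ⟨v, rfl⟩, Subtype.ext_iff, ← componentwise_coe,
    ← componentwise_coe]

theorem exists_isNeighborSelection_hasUniqueSwap_iff [Finite V] [Nonempty V]
    (hiso : ∀ v, ∃ w, G.Adj v w) :
    (∃ g r s, IsNeighborSelection G g ∧ HasUniqueSwap g r s) ↔
      ∀ c₁ c₂ : G.ConnectedComponent,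
        (G.induce c₁.supp).IsTree → (G.induce c₂.supp).IsTree → c₁ = c₂ := by
  constructor
  · rintro ⟨g, r, s, hg, hswap⟩ c₁ c₂ h₁ h₂
    exact (hg.connectedComponentMk_eq_of_isTree hswap h₁).symm.trans
      (hg.connectedComponentMk_eq_of_isTree hswap h₂)
  · intro huniq
    obtain ⟨c₀, hc₀⟩ : ∃ c₀ : G.ConnectedComponent, ∀ c : G.ConnectedComponent,
        (G.induce c.supp).IsTree → c₀ = c := by
      by_cases h : ∃ c : G.ConnectedComponent, (G.induce c.supp).IsTree
      · obtain ⟨c₀, h₀⟩ := h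
        exact ⟨c₀, fun c => huniq c₀ c h₀⟩
      · exact ⟨Classical.arbitrary _, fun c hc => absurd ⟨c, hc⟩ h⟩
    obtain ⟨r, hr⟩ := c₀.nonempty_supp
    obtain ⟨s, hrs⟩ := hiso r
    obtain ⟨g, hg⟩ := exists_isNeighborSelection_hasUniqueSwap_of_forall_isTree_mem_supp hrs
      fun c hc => hc₀ c hc ▸ hr
    exact ⟨g, r, s, hg⟩

end NeighborSelection

section EdgeBottom

variable {V : Type*} [DecidableEq V] {G : SimpleGraph V} {g : V → V} {r s : V}

/-- The bottom of the interval with top `e` in the partition associated with a neighbor selection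
`g`: an end of `e` is discarded when the other end selects `e`, which leaves in the interval exactly
those singletons `{v}` for which `v` selects `e`. -/
def edgeBottom (g : V → V) (e : Sym2 V) : Finset V :=
  e.toFinset \ {v ∈ e.toFinset | s(v, g v) = e}.image g

lemma edgeBottom_subset (g : V → V) (e : Sym2 V) : edgeBottom g e ⊆ e.toFinset :=
  Finset.sdiff_subset

lemma edgeBottom_mk_subset_iff {a b : V} {S : Finset V} :
    edgeBottom g s(a, b) ⊆ S ↔ (g a = b ∨ b ∈ S) ∧ (g b = a ∨ a ∈ S) := by
  have ha : s(a, g a) = s(a, b) ↔ g a = b := Sym2.congr_right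
  have hb : s(b, g b) = s(a, b) ↔ g b = a := by rw [Sym2.eq_swap (a := a), Sym2.congr_right]
  simp only [edgeBottom, Finset.subset_iff, Finset.mem_sdiff, Finset.mem_image, Finset.mem_filter,
    Sym2.mem_toFinset, Sym2.mem_iff]
  grind

namespace IsNeighborSelection

lemma existsUnique_edgeBottom_subset_empty (hg : IsNeighborSelection G g)
    (hswap : HasUniqueSwap g r s) :
    ∃! e : G.edgeSet, edgeBottom g e ⊆ ∅ ∧ ∅ ⊆ (e : Sym2 V).toFinset := by
  have hrs : g r = s := hg.apply_left hswap
  have hsr : g s = r := hrs ▸ (hswap r).mpr (.inl rfl)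
  refine ⟨⟨s(r, s), hrs ▸ hg r⟩, ⟨edgeBottom_mk_subset_iff.mpr ⟨.inl hrs, .inl hsr⟩, by simp⟩, ?_⟩
  rintro ⟨⟨a, b⟩, hab⟩ ⟨hbottom, -⟩
  obtain ⟨rfl, hb⟩ : g a = b ∧ g b = a := by simpa using edgeBottom_mk_subset_iff.mp hbottom
  exact Subtype.ext (hg.mk_apply_eq hswap hb)

lemma existsUnique_edgeBottom_subset_singleton (hg : IsNeighborSelection G g) (v : V) :
    ∃! e : G.edgeSet, edgeBottom g e ⊆ {v} ∧ {v} ⊆ (e : Sym2 V).toFinset := by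
  refine ⟨⟨s(v, g v), hg v⟩, ⟨edgeBottom_mk_subset_iff.mpr (by simp), by simp⟩, ?_⟩
  rintro ⟨e, he⟩ ⟨hbottom, hv⟩
  obtain ⟨w, rfl⟩ : v ∈ e := by simpa using hv
  have hw : w ≠ v := SimpleGraph.Adj.ne' he
  obtain rfl : g v = w := by simpa [hw] using (edgeBottom_mk_subset_iff.mp hbottom).1
  rfl

end IsNeighborSelection

end EdgeBottom

section IntervalPartition

variable {V : Type} [DecidableEq V] {G : SimpleGraph V}

/-- The intervals `[R i, F i]` form a partition of the faces of `Δ(G)` with edges as tops. Unlike in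
`GraphPartitionable` the index type is arbitrary, so that intervals can be indexed by edges. -/
structure IsIntervalPartition (G : SimpleGraph V) {ι : Type*} (R F : ι → Finset V) : Prop where
  bottom_subset_top : ∀ i, R i ⊆ F i
  exists_top_eq : ∀ i, ∃ u w : V, G.Adj u w ∧ F i = {u, w}
  existsUnique : ∀ S : Finset V, GraphFace G S → ∃! i, R i ⊆ S ∧ S ⊆ F i

namespace IsIntervalPartition

variable {ι : Type*} {R F : ι → Finset V}

lemma graphPartitionable [Finite ι] (h : IsIntervalPartition G R F) : GraphPartitionable G := by
  obtain ⟨N, ⟨e⟩⟩ := Finite.exists_equiv_fin ι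
  refine ⟨N, R ∘ e.symm, F ∘ e.symm, fun _ => h.bottom_subset_top _, fun _ => h.exists_top_eq _,
    fun S hS => ?_⟩
  exact (e.symm.existsUnique_congr_right (q := fun i => R i ⊆ S ∧ S ⊆ F i)).mpr
    (h.existsUnique S hS)

lemma exists_bottom_subset_singleton (h : IsIntervalPartition G R F) (v : V) :
    ∃ i w, R i ⊆ {v} ∧ G.Adj v w ∧ F i = {v, w} := by
  obtain ⟨i, ⟨hR, hv⟩, -⟩ := h.existsUnique {v} (.inr (.inl ⟨v, rfl⟩))
  obtain ⟨a, b, hab, hF⟩ := h.exists_top_eq i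
  rw [hF, Finset.singleton_subset_iff, Finset.mem_insert, Finset.mem_singleton] at hv
  rcases hv with rfl | rfl
  · exact ⟨i, b, hR, hab, hF⟩
  · exact ⟨i, a, hR, hab.symm, by rw [hF, Finset.pair_comm]⟩

lemma bottom_eq_empty (h : IsIntervalPartition G R F) {v w : V} (hvw : G.Adj v w) {i j : ι}
    (hi : R i ⊆ {v}) (hFi : F i = {v, w}) (hj : R j ⊆ {w}) (hFj : F j = {v, w}) : R i = ∅ := by
  have hij : i = j := (h.existsUnique {v, w} (.inr (.inr ⟨v, w, hvw, rfl⟩))).unique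
    ⟨hi.trans (by simp), hFi.ge⟩ ⟨hj.trans (by simp), hFj.ge⟩
  subst hij
  have hdisj : Disjoint ({v} : Finset V) {w} := Finset.disjoint_singleton.mpr hvw.ne
  exact Finset.subset_empty.mp (hdisj hi hj)

theorem exists_isNeighborSelection (h : IsIntervalPartition G R F) :
    ∃ g r s, IsNeighborSelection G g ∧ HasUniqueSwap g r s := by
  choose i g hR hadj hF using h.exists_bottom_subset_singleton
  obtain ⟨i₀, ⟨hR₀, -⟩, hi₀⟩ := h.existsUnique ∅ (.inl rfl)
  have hempty : R i₀ = ∅ := Finset.subset_empty.mp hR₀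
  obtain ⟨r, s, -, hF₀⟩ := h.exists_top_eq i₀
  have index_eq : ∀ {j v}, R j = ∅ → v ∈ F j → i v = j := fun {j v} hj hv =>
    (h.existsUnique {v} (.inr (.inl ⟨v, rfl⟩))).unique ⟨hR v, by simp [hF]⟩ ⟨by simp [hj], by simpa⟩
  have swap_iff : ∀ v, g (g v) = v ↔ R (i v) = ∅ := fun v => by
    refine ⟨fun hv => ?_, fun hv => ?_⟩
    · exact h.bottom_eq_empty (hadj v) (hR v) (hF v) (hR (g v)) (by rw [hF, hv, Finset.pair_comm])
    · have hi : i (g v) = i v := index_eq hv (by simp [hF])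
      have hmem : v ∈ F (i (g v)) := by simp [hi, hF]
      rw [hF, Finset.mem_insert, Finset.mem_singleton] at hmem
      exact (hmem.resolve_left (hadj v).ne).symm
  have bottom_iff : ∀ v, R (i v) = ∅ ↔ v ∈ F i₀ := fun v => by
    refine ⟨fun hv => ?_, fun hv => ?_⟩
    · rw [← hi₀ (i v) ⟨hv.le, Finset.empty_subset _⟩]
      simp [hF]
    · rw [index_eq hempty hv, hempty]
  exact ⟨g, r, s, hadj, fun v => by simp [swap_iff, bottom_iff, hF₀]⟩

end IsIntervalPartition

theorem IsNeighborSelection.isIntervalPartition {g : V → V} {r s : V}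
    (hg : IsNeighborSelection G g) (hswap : HasUniqueSwap g r s) :
    IsIntervalPartition G (fun e : G.edgeSet => edgeBottom g e)
      (fun e : G.edgeSet => (e : Sym2 V).toFinset) where
  bottom_subset_top e := edgeBottom_subset g e
  exists_top_eq := by
    rintro ⟨⟨u, w⟩, huw⟩
    exact ⟨u, w, huw, Sym2.toFinset_mk_eq⟩
  existsUnique := by
    rintro S (rfl | ⟨v, rfl⟩ | ⟨u, w, huw, rfl⟩)
    · exact hg.existsUnique_edgeBottom_subset_empty hswap
    · exact hg.existsUnique_edgeBottom_subset_singleton v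
    · refine ⟨⟨s(u, w), huw⟩, by simp [edgeBottom_mk_subset_iff, Sym2.toFinset_mk_eq], ?_⟩
      rintro ⟨e, he⟩ ⟨-, hmem⟩
      refine Subtype.ext ((Sym2.mem_and_mem_iff huw.ne).mp ?_)
      simpa [Finset.insert_subset_iff] using hmem

theorem graphPartitionable_iff_exists_isNeighborSelection [Finite V] :
    GraphPartitionable G ↔ ∃ g r s, IsNeighborSelection G g ∧ HasUniqueSwap g r s := by
  constructor
  · rintro ⟨N, R, F, hRF, hF, huniq⟩
    exact IsIntervalPartition.exists_isNeighborSelection ⟨hRF, hF, huniq⟩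
  · rintro ⟨g, r, s, hg, hswap⟩
    exact (hg.isIntervalPartition hswap).graphPartitionable

end IntervalPartition

theorem graph_partitionable_iff_at_most_one_tree_component {V : Type} [Fintype V]
    [DecidableEq V] (G : SimpleGraph V) (hne : G.edgeSet.Nonempty)
    (hiso : ∀ v : V, ∃ w, G.Adj v w) :
    GraphPartitionable G ↔
      ∀ c₁ c₂ : G.ConnectedComponent,
        (G.induce c₁.supp).IsTree → (G.induce c₂.supp).IsTree → c₁ = c₂ := by
  have : Nonempty V := hne.elim fun e _ => ⟨e.out.1⟩
  rw [graphPartitionable_iff_exists_isNeighborSelection,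
    exists_isNeighborSelection_hasUniqueSwap_iff hiso]
end
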